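/- Let a ≤ b be real numbers and let α ∈ (0,1]. For a Borel probability measure μ supported on [a,b], define CVaR_α(μ) = sup_{ν ∈ ℝ} ( ν − (1/α) ∫_{[a,b]} max(ν − x, 0) dμ(x) ). Then for all Borel probability measures μ, ν supported on [a,b] with CDFs F_μ, F_ν: |CVaR_α(μ) − CVaR_α(ν)| ≤ ((b − a)/α) · sup_{t∈ℝ} |F_μ(t) − F_ν(t)|. -/

import Mathlib

open MeasureTheory

/-- The conditional value at risk at level `α` of a Borel probability measure `μ`
supported on `[a, b]`:
`CVaR_α(μ) = sup_{ν ∈ ℝ} (ν - (1/α) ∫_{[a,b]} max (ν - x) 0 dμ(x))`. -/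
noncomputable def CVaR (α a b : ℝ) (μ : Measure ℝ) : ℝ :=
  ⨆ v : ℝ, (v - (1 / α) * ∫ x in Set.Icc a b, max (v - x) 0 ∂μ)

/-!
The shortfall `∫ (v - x)⁺ dμ(x)` is the integral of the CDF of `μ` up to `v`. For `v ≤ b` only an
interval of length at most `b - a` matters, so changing `μ` to `ν` moves it by at most `b - a`
times the sup distance of the CDFs; raising `v` beyond `b` adds `v - b` to both shortfalls and
leaves their difference unchanged. Dividing by `α` and taking suprema over `v` keeps the bound.
-/

open Set

theorem abs_ciSup_sub_ciSup_le {ι : Type*} [Nonempty ι] {f g : ι → ℝ} {C : ℝ}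
    (hf : BddAbove (range f)) (hg : BddAbove (range g)) (h : ∀ i, |f i - g i| ≤ C) :
    |(⨆ i, f i) - ⨆ i, g i| ≤ C := by
  have hfg : ⨆ i, f i ≤ (⨆ i, g i) + C :=
    ciSup_le fun i ↦ by linarith [le_ciSup hg i, (abs_le.1 (h i)).2]
  have hgf : ⨆ i, g i ≤ (⨆ i, f i) + C :=
    ciSup_le fun i ↦ by linarith [le_ciSup hf i, (abs_le.1 (h i)).1]
  exact abs_sub_le_iff.2 ⟨by linarith, by linarith⟩

/-- The Kolmogorov distance: the supremum distance between the CDFs of `μ` and `ν`. For infinite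
measures the supremum may be a junk value. -/
noncomputable def kolmogorovDist (μ ν : Measure ℝ) : ℝ :=
  ⨆ t : ℝ, |μ.real (Iic t) - ν.real (Iic t)|

/-- The expected shortfall of `μ` below the threshold `v`, also known as its first lower partial
moment; it is the penalty in the variational formula for `CVaR`. -/
noncomputable def shortfall (μ : Measure ℝ) (v : ℝ) : ℝ :=
  ∫ x, max (v - x) 0 ∂μ

section FiniteMeasure

variable {μ ν : Measure ℝ} [IsFiniteMeasure μ] [IsFiniteMeasure ν] {a b v : ℝ}

theorem abs_measureReal_Iic_sub_le_kolmogorovDist (t : ℝ) :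
    |μ.real (Iic t) - ν.real (Iic t)| ≤ kolmogorovDist μ ν := by
  refine le_ciSup (f := fun t ↦ |μ.real (Iic t) - ν.real (Iic t)|)
    ⟨max (μ.real univ) (ν.real univ), ?_⟩ t
  rintro _ ⟨s, rfl⟩
  exact abs_sub_le_of_nonneg_of_le
    measureReal_nonneg ((measureReal_mono (subset_univ _)).trans (le_max_left _ _))
    measureReal_nonneg ((measureReal_mono (subset_univ _)).trans (le_max_right _ _))

theorem intervalIntegrable_measureReal_Iic :
    IntervalIntegrable (fun t ↦ μ.real (Iic t)) volume a b :=
  Monotone.intervalIntegrable fun _ _ hst ↦ measureReal_mono (Iic_subset_Iic.2 hst)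

theorem integrable_max_sub_zero (ha : ∀ᵐ x ∂μ, a ≤ x) (v : ℝ) :
    Integrable (fun x ↦ max (v - x) 0) μ := by
  refine integrable_of_le_of_le (g₁ := 0) (g₂ := fun _ ↦ max (v - a) 0) (by fun_prop)
    (.of_forall fun x ↦ le_max_right _ _) ?_ (integrable_zero _ _ _) (integrable_const _)
  filter_upwards [ha] with x hx
  gcongr

theorem shortfall_eq_integral_measureReal_Iic (ha : ∀ᵐ x ∂μ, a ≤ x) (hav : a ≤ v) :
    shortfall μ v = ∫ t in a..v, μ.real (Iic t) := by
  have superlevel {t : ℝ} (ht : 0 < t) : {x | t ≤ max (v - x) 0} = Iic (v - t) := by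
    ext x
    simp only [mem_ofPred_eq, mem_Iic, le_max_iff, ht.not_ge, or_false, le_sub_comm]
  have shortfall_le : ∀ᵐ x ∂μ, max (v - x) 0 ≤ v - a := by
    filter_upwards [ha] with x hx
    exact max_le (by linarith) (by linarith)
  calc shortfall μ v
      = ∫ t in Ioc 0 (v - a), μ.real {x | t ≤ max (v - x) 0} :=
        (integrable_max_sub_zero ha v).integral_eq_integral_Ioc_meas_le
          (.of_forall fun x ↦ le_max_right _ _) shortfall_le
    _ = ∫ t in Ioc 0 (v - a), μ.real (Iic (v - t)) :=
        setIntegral_congr_fun measurableSet_Ioc fun t ht ↦ by simp only [superlevel ht.1]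
    _ = ∫ t in 0..(v - a), μ.real (Iic (v - t)) :=
        (intervalIntegral.integral_of_le (sub_nonneg.2 hav)).symm
    _ = ∫ t in a..v, μ.real (Iic t) := by
        rw [intervalIntegral.integral_comp_sub_left (fun t ↦ μ.real (Iic t)), sub_sub_cancel,
          sub_zero]

theorem abs_shortfall_sub_le_mul_kolmogorovDist (hμ : ∀ᵐ x ∂μ, a ≤ x) (hν : ∀ᵐ x ∂ν, a ≤ x)
    (hav : a ≤ v) : |shortfall μ v - shortfall ν v| ≤ (v - a) * kolmogorovDist μ ν := by
  rw [shortfall_eq_integral_measureReal_Iic hμ hav, shortfall_eq_integral_measureReal_Iic hν hav,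
    ← intervalIntegral.integral_sub intervalIntegrable_measureReal_Iic
      intervalIntegrable_measureReal_Iic, ← Real.norm_eq_abs]
  calc ‖∫ t in a..v, (μ.real (Iic t) - ν.real (Iic t))‖
      ≤ kolmogorovDist μ ν * |v - a| :=
        intervalIntegral.norm_integral_le_of_norm_le_const fun t _ ↦
          abs_measureReal_Iic_sub_le_kolmogorovDist t
    _ = (v - a) * kolmogorovDist μ ν := by rw [abs_of_nonneg (sub_nonneg.2 hav), mul_comm]

theorem shortfall_eq_shortfall_min_add (hμ : ∀ᵐ x ∂μ, x ∈ Icc a b) (v : ℝ) :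
    shortfall μ v = shortfall μ (min v b) + μ.real univ * max (v - b) 0 := by
  have pointwise : ∀ᵐ x ∂μ, max (v - x) 0 = max (min v b - x) 0 + max (v - b) 0 := by
    filter_upwards [hμ] with x hx
    have := hx.2
    grind
  rw [shortfall, integral_congr_ae pointwise,
    integral_add (integrable_max_sub_zero (hμ.mono fun _ hx ↦ hx.1) _) (integrable_const _),
    integral_const, smul_eq_mul, shortfall]

end FiniteMeasure

section BoundedSupport

variable {μ ν : Measure ℝ} {a b α : ℝ}

theorem CVaR_eq_ciSup_sub_shortfall (hμ : ∀ᵐ x ∂μ, x ∈ Icc a b) :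
    CVaR α a b μ = ⨆ v, (v - 1 / α * shortfall μ v) := by
  simp only [CVaR, shortfall, Measure.restrict_eq_self_of_ae_mem hμ]

variable [IsProbabilityMeasure μ] [IsProbabilityMeasure ν]

theorem bddAbove_range_sub_shortfall (hα : α ∈ Ioc 0 1) (hμ : ∀ᵐ x ∂μ, x ∈ Icc a b) :
    BddAbove (range fun v ↦ v - 1 / α * shortfall μ v) := by
  have shortfall_nonneg (v : ℝ) : 0 ≤ shortfall μ v :=
    integral_nonneg fun x ↦ le_max_right _ _
  refine ⟨b, forall_mem_range.2 fun v ↦ sub_le_comm.1 ?_⟩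
  calc v - b
      ≤ shortfall μ (min v b) + max (v - b) 0 :=
        (le_max_left _ _).trans (le_add_of_nonneg_left (shortfall_nonneg _))
    _ = shortfall μ v := by rw [shortfall_eq_shortfall_min_add hμ v, probReal_univ, one_mul]
    _ ≤ 1 / α * shortfall μ v :=
        le_mul_of_one_le_left (shortfall_nonneg v) (one_le_one_div hα.1 hα.2)

theorem abs_shortfall_sub_le_length_mul_kolmogorovDist (hab : a ≤ b)
    (hμ : ∀ᵐ x ∂μ, x ∈ Icc a b) (hν : ∀ᵐ x ∂ν, x ∈ Icc a b) (v : ℝ) :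
    |shortfall μ v - shortfall ν v| ≤ (b - a) * kolmogorovDist μ ν := by
  -- Starting the CDF integral at `c` instead of `a` also covers thresholds below `a`.
  set c := min v b - (b - a) with hc
  have hca : c ≤ a := by linarith [min_le_right v b]
  calc |shortfall μ v - shortfall ν v|
      = |shortfall μ (min v b) - shortfall ν (min v b)| := by
        rw [shortfall_eq_shortfall_min_add hμ v, shortfall_eq_shortfall_min_add hν v,
          probReal_univ, probReal_univ, add_sub_add_right_eq_sub]
    _ ≤ (min v b - c) * kolmogorovDist μ ν :=
        abs_shortfall_sub_le_mul_kolmogorovDist (hμ.mono fun _ hx ↦ hca.trans hx.1)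
          (hν.mono fun _ hx ↦ hca.trans hx.1) (by linarith)
    _ = (b - a) * kolmogorovDist μ ν := by rw [hc, sub_sub_cancel]

end BoundedSupport

/-- Lipschitz continuity of CVaR at level `α ∈ (0, 1]` with respect to the supremum
distance of CDFs, with Lipschitz constant `(b - a) / α`. -/
theorem cvar_lipschitz_sup
    (a b : ℝ) (hab : a ≤ b) (α : ℝ) (hα : α ∈ Set.Ioc (0 : ℝ) 1)
    (μ ν : Measure ℝ) [IsProbabilityMeasure μ] [IsProbabilityMeasure ν]
    (hμ : μ (Set.Icc a b) = 1) (hν : ν (Set.Icc a b) = 1) :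
    |CVaR α a b μ - CVaR α a b ν| ≤
      ((b - a) / α) * ⨆ t : ℝ, |(μ (Set.Iic t)).toReal - (ν (Set.Iic t)).toReal| := by
  rw [← mem_ae_iff_prob_eq_one measurableSet_Icc] at hμ hν
  rw [CVaR_eq_ciSup_sub_shortfall hμ, CVaR_eq_ciSup_sub_shortfall hν]
  refine abs_ciSup_sub_ciSup_le (bddAbove_range_sub_shortfall hα hμ)
    (bddAbove_range_sub_shortfall hα hν) fun v ↦ ?_
  calc |(v - 1 / α * shortfall μ v) - (v - 1 / α * shortfall ν v)|
      = |shortfall μ v - shortfall ν v| / α := by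
        rw [sub_sub_sub_cancel_left, ← mul_sub, abs_mul, abs_of_pos (one_div_pos.2 hα.1),
          abs_sub_comm, one_div_mul_eq_div]
    _ ≤ (b - a) * kolmogorovDist μ ν / α := by
        gcongr
        · exact hα.1.le
        · exact abs_shortfall_sub_le_length_mul_kolmogorovDist hab hμ hν v
    _ = (b - a) / α * kolmogorovDist μ ν := mul_div_right_comm _ _ _
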